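/- Let γ ∈ ℂ and k ≥ 0, and suppose γ ∉ {−1, −2, …, −k}. Then the left ideal A₁(Y∂ − γ) + A₁Y^k equals all of A₁, where Y∂ denotes the composite of multiplication by y with the derivative operator. -/

import Mathlib

set_option synthInstance.maxHeartbeats 1000000
set_option maxHeartbeats 1000000

/-- Multiplication by the variable `y`, as an endomorphism of `ℂ[y]`. -/
noncomputable def Yop : Module.End ℂ (Polynomial ℂ) := LinearMap.mulLeft ℂ Polynomial.X

/-- The formal derivative `∂`, as an endomorphism of `ℂ[y]`. -/
noncomputable def Dop : Module.End ℂ (Polynomial ℂ) :=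
  (Polynomial.derivative : Polynomial ℂ →ₗ[ℂ] Polynomial ℂ)

/-- The Weyl algebra `A₁`, realized as the ℂ-subalgebra of `End_ℂ(ℂ[y])` generated by
`Y` and `∂`. -/
noncomputable def A1 : Subalgebra ℂ (Module.End ℂ (Polynomial ℂ)) :=
  Algebra.adjoin ℂ {Yop, Dop}

/-- `Y` and `∂` as elements of `A₁`. -/
noncomputable def wY : A1 := ⟨Yop, Algebra.subset_adjoin (by simp)⟩
noncomputable def wD : A1 := ⟨Dop, Algebra.subset_adjoin (by simp)⟩

/-!
In a ring where `d x = x d + 1`, for `c` commuting with `x` one has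
`d xⁿ⁺¹ - xⁿ (x d - c) = (c + n + 1) xⁿ`. When `c + n + 1` is a unit, a left ideal containing
`x d - c` and `xⁿ⁺¹` therefore contains `xⁿ`; descending from `xᵏ` one reaches `x⁰ = 1`.
-/

section WeylRelation

variable {A : Type*}

theorem mul_pow_succ_of_mul_eq_mul_add_one [Semiring A] {x d : A} (h : d * x = x * d + 1)
    (n : ℕ) : d * x ^ (n + 1) = x ^ (n + 1) * d + (n + 1 : ℕ) * x ^ n := by
  induction n with
  | zero => simpa using h
  | succ n ih =>
    calc d * x ^ (n + 2)
        = d * x ^ (n + 1) * x := by rw [pow_succ x (n + 1), mul_assoc]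
      _ = x ^ (n + 1) * (d * x) + (n + 1 : ℕ) * x ^ (n + 1) := by
          rw [ih, add_mul, mul_assoc, mul_assoc, ← pow_succ]
      _ = x ^ (n + 2) * d + (x ^ (n + 1) + (n + 1 : ℕ) * x ^ (n + 1)) := by
          rw [h, mul_add, mul_one, ← mul_assoc, ← pow_succ, add_assoc]
      _ = x ^ (n + 2) * d + (n + 2 : ℕ) * x ^ (n + 1) := by
          rw [Nat.cast_succ (n + 1), add_one_mul, add_comm (x ^ (n + 1))]

variable [Ring A] {x d c : A}

theorem mul_pow_succ_sub_pow_mul_mul_sub (h : d * x = x * d + 1) (hc : Commute c x) (n : ℕ) :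
    d * x ^ (n + 1) - x ^ n * (x * d - c) = (c + (n + 1 : ℕ)) * x ^ n := by
  rw [mul_pow_succ_of_mul_eq_mul_add_one h, mul_sub, ← mul_assoc, ← pow_succ,
    ← (hc.pow_right n).eq, add_mul]
  abel

theorem pow_mem_of_pow_succ_mem_of_mul_sub_mem (h : d * x = x * d + 1) (hc : Commute c x) {n : ℕ}
    (hu : IsUnit (c + (n + 1 : ℕ))) {I : Ideal A} (hI : x * d - c ∈ I) (hn : x ^ (n + 1) ∈ I) :
    x ^ n ∈ I := by
  rw [← I.unit_mul_mem_iff_mem hu, ← mul_pow_succ_sub_pow_mul_mul_sub h hc]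
  exact I.sub_mem (I.mul_mem_left d hn) (I.mul_mem_left (x ^ n) hI)

theorem eq_top_of_pow_mem_of_mul_sub_mem (h : d * x = x * d + 1) (hc : Commute c x) {I : Ideal A}
    (hI : x * d - c ∈ I) {k : ℕ} (hu : ∀ j : ℕ, 1 ≤ j → j ≤ k → IsUnit (c + (j : A)))
    (hk : x ^ k ∈ I) : I = ⊤ := by
  induction k with
  | zero => exact I.eq_top_iff_one.mpr (pow_zero x ▸ hk)
  | succ n ih =>
    exact ih (fun j hj hjn => hu j hj (hjn.trans n.le_succ))
      (pow_mem_of_pow_succ_mem_of_mul_sub_mem h hc (hu (n + 1) n.succ_pos le_rfl) hI hk)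

theorem stmt14_general (h : d * x = x * d + 1) (hc : Commute c x) (k : ℕ)
    (hu : ∀ j : ℕ, 1 ≤ j → j ≤ k → IsUnit (c + (j : A))) :
    Ideal.span {x * d - c, x ^ k} = ⊤ :=
  eq_top_of_pow_mem_of_mul_sub_mem h hc (Ideal.subset_span (Set.mem_insert _ _)) hu
    (Ideal.subset_span (Set.mem_insert_of_mem _ rfl))

end WeylRelation

theorem isUnit_algebraMap_add_natCast {K A : Type*} [Field K] [Semiring A] [Algebra K A] {γ : K}
    {n : ℕ} (hγ : γ ≠ -(n : K)) : IsUnit (algebraMap K A γ + n) := by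
  have hunit : IsUnit (γ + n) := isUnit_iff_ne_zero.mpr (mt eq_neg_of_add_eq_zero_left hγ)
  simpa only [map_add, map_natCast] using hunit.map (algebraMap K A)

theorem Dop_mul_Yop : Dop * Yop = Yop * Dop + 1 := by
  refine LinearMap.ext fun p => ?_
  simp only [Module.End.mul_apply, LinearMap.add_apply, Module.End.one_apply, Yop, Dop,
    LinearMap.mulLeft_apply]
  rw [Polynomial.derivative_mul, Polynomial.derivative_X, one_mul, add_comm]

theorem wD_mul_wY : wD * wY = wY * wD + 1 :=
  Subtype.ext Dop_mul_Yop

/-- for `γ ∈ ℂ` with `γ ∉ {−1, …, −k}`, the left ideal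
`A₁(Y∂ − γ) + A₁Y^k` is all of `A₁`. -/
theorem stmt14 (γ : ℂ) (k : ℕ) (hγ : ∀ j : ℕ, 1 ≤ j → j ≤ k → γ ≠ -(j : ℂ)) :
    Ideal.span {wY * wD - algebraMap ℂ A1 γ, wY ^ k} = ⊤ := by
  exact stmt14_general (A := A1) wD_mul_wY (Algebra.commute_algebraMap_left γ wY) k
    fun j hj hjk => isUnit_algebraMap_add_natCast (hγ j hj hjk)
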